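/- arXiv:2101.04225 — 4 statements merged into one kernel-verified Lean document; each statement's English description precedes it below -/
import Mathlib

section
/- Let A be an N×N matrix over a commutative ring. For all integers i_1, i_2, j_1, j_2 with 1 ≤ i_1 < i_2 ≤ N and 1 ≤ j_1 < j_2 ≤ N, one has det A · det A_{i_1,i_2}^{j_1,j_2} = det A_{i_1}^{j_1} · det A_{i_2}^{j_2} − det A_{i_1}^{j_2} · det A_{i_2}^{j_1}. -/
open Matrix

/-!
Cramer's rule writes `det A • v` as the combination of the rows of `A` whose `i`-th coefficient is
the determinant of `A` with its `i`-th row replaced by `v`. Place this combination in row `i₂` of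
the matrix obtained from `A` by putting `u` in row `i₁`, and expand the determinant linearly in that
row: every term repeats a row, except those of the rows `i₁` and `i₂` of `A`. What remains is a
quadratic relation between determinants with replaced rows. For unit vectors `u` and `v` these
determinants are signed minors, and the three products in the relation carry the same sign.
-/

section ReplacedRows

variable {R n : Type*} [CommRing R] [Fintype n] [DecidableEq n]

theorem det_smul_eq_sum_det_updateRow_smul (A : Matrix n n R) (v : n → R) :
    A.det • v = ∑ i, (A.updateRow i v).det • A i := by
  rw [← det_transpose, ← mulVec_cramer, mulVec_transpose, vecMul_eq_sum]
  simp only [cramer_transpose_apply]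

theorem det_updateRow_updateRow_self (A : Matrix n n R) (u : n → R) {i j : n} (hij : i ≠ j) :
    ((A.updateRow i u).updateRow j (A i)).det = -(A.updateRow j u).det := by
  have swap_rows : (A.updateRow i u).updateRow j (A i) =
      (A.updateRow j u).submatrix (Equiv.swap i j) id := by
    ext k l
    rcases eq_or_ne k j with rfl | hkj
    · simp [updateRow_ne hij]
    rcases eq_or_ne k i with rfl | hki
    · simp [updateRow_ne hkj]
    · simp [updateRow_ne hkj, updateRow_ne hki, Equiv.swap_apply_of_ne_of_ne hki hkj]
  simp [swap_rows, det_permute, Equiv.Perm.sign_swap hij]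

theorem det_updateRow_updateRow_eq_zero (A : Matrix n n R) (u : n → R) {i j k : n}
    (hki : k ≠ i) (hkj : k ≠ j) : ((A.updateRow i u).updateRow j (A k)).det = 0 := by
  rw [← updateRow_ne (M := A) (b := u) hki]
  exact det_updateRow_eq_zero hkj

theorem det_mul_det_updateRow_updateRow (A : Matrix n n R) (u v : n → R) {i₁ i₂ : n}
    (hi : i₁ ≠ i₂) :
    A.det * ((A.updateRow i₁ u).updateRow i₂ v).det =
      (A.updateRow i₁ u).det * (A.updateRow i₂ v).det -
        (A.updateRow i₂ u).det * (A.updateRow i₁ v).det := by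
  have restore_row : (A.updateRow i₁ u).updateRow i₂ (A i₂) = A.updateRow i₁ u := by
    rw [← updateRow_ne (M := A) (b := u) hi.symm, updateRow_eq_self]
  calc
    A.det * ((A.updateRow i₁ u).updateRow i₂ v).det
        = ((A.updateRow i₁ u).updateRow i₂ (∑ k, (A.updateRow k v).det • A k)).det := by
      rw [← det_updateRow_smul, det_smul_eq_sum_det_updateRow_smul]
    _ = ∑ k, (A.updateRow k v).det * ((A.updateRow i₁ u).updateRow i₂ (A k)).det := by
      simp only [← cramer_transpose_apply, map_sum, map_smul, Finset.sum_apply, Pi.smul_apply,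
        smul_eq_mul]
    _ = (A.updateRow i₁ v).det * ((A.updateRow i₁ u).updateRow i₂ (A i₁)).det +
          (A.updateRow i₂ v).det * ((A.updateRow i₁ u).updateRow i₂ (A i₂)).det :=
      Fintype.sum_eq_add i₁ i₂ hi fun k hk => by
        rw [det_updateRow_updateRow_eq_zero A u hk.1 hk.2, mul_zero]
    _ = (A.updateRow i₁ u).det * (A.updateRow i₂ v).det -
          (A.updateRow i₂ u).det * (A.updateRow i₁ v).det := by
      rw [det_updateRow_updateRow_self A u hi, restore_row]
      ring

end ReplacedRows

section Minors

theorem submatrix_updateRow_of_injective {R l m n o : Type*} [DecidableEq l] [DecidableEq m]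
    (A : Matrix m n R) (v : n → R) {f : l → m} (hf : Function.Injective f) (g : o → n) (p : l) :
    (A.updateRow (f p) v).submatrix f g = (A.submatrix f g).updateRow p (v ∘ g) := by
  ext a b
  simp [updateRow_apply, hf.eq_iff]

variable {R : Type*} [CommRing R] {N : ℕ}

theorem det_updateRow_single (A : Matrix (Fin (N + 1)) (Fin (N + 1)) R) (i j : Fin (N + 1)) :
    (A.updateRow i (Pi.single j 1)).det =
      (-1) ^ (i + j : ℕ) * (A.submatrix i.succAbove j.succAbove).det := by
  rw [← adjugate_apply, adjugate_fin_succ_eq_det_submatrix]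

theorem det_updateRow_single_updateRow_single (A : Matrix (Fin (N + 2)) (Fin (N + 2)) R)
    (i j : Fin (N + 2)) (p q : Fin (N + 1)) :
    ((A.updateRow (i.succAbove p) (Pi.single (j.succAbove q) 1)).updateRow i
        (Pi.single j 1)).det =
      (-1) ^ (i + j : ℕ) * ((-1) ^ (p + q : ℕ) *
        (A.submatrix (i.succAbove ∘ p.succAbove) (j.succAbove ∘ q.succAbove)).det) := by
  have single_comp : (Pi.single (j.succAbove q) 1 : Fin (N + 2) → R) ∘ j.succAbove =
      Pi.single q 1 :=
    Function.update_comp_eq_of_injective _ Fin.succAbove_right_injective q 1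
  rw [det_updateRow_single, submatrix_updateRow_of_injective _ _ Fin.succAbove_right_injective,
    single_comp, det_updateRow_single, submatrix_submatrix]

end Minors

theorem stmt2 {R : Type*} [CommRing R] {N : ℕ}
    (A : Matrix (Fin (N + 2)) (Fin (N + 2)) R)
    (i1 i2 j1 j2 : Fin (N + 2)) (hi : i1 < i2) (hj : j1 < j2) :
    A.det *
      (A.submatrix
        (fun k => i2.succAbove ((i1.castPred (Fin.ne_last_of_lt hi)).succAbove k))
        (fun k => j2.succAbove ((j1.castPred (Fin.ne_last_of_lt hj)).succAbove k))).det =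
    (A.submatrix i1.succAbove j1.succAbove).det *
        (A.submatrix i2.succAbove j2.succAbove).det -
      (A.submatrix i1.succAbove j2.succAbove).det *
        (A.submatrix i2.succAbove j1.succAbove).det := by
  set p := i1.castPred (Fin.ne_last_of_lt hi)
  set q := j1.castPred (Fin.ne_last_of_lt hj)
  have row_eq : i2.succAbove p = i1 := Fin.succAbove_castPred_of_lt i2 i1 hi
  have col_eq : j2.succAbove q = j1 := Fin.succAbove_castPred_of_lt j2 j1 hj
  have double_minor := det_updateRow_single_updateRow_single A i2 j2 p q
  rw [row_eq, col_eq, Fin.coe_castPred, Fin.coe_castPred] at double_minor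
  have signed := det_mul_det_updateRow_updateRow A (Pi.single j1 1) (Pi.single j2 1) hi.ne
  simp only [double_minor, det_updateRow_single, Function.comp_def] at signed
  have sign_isUnit : IsUnit ((-1 : R) ^ (i1 + i2 + j1 + j2 : ℕ)) := isUnit_one.neg.pow _
  apply sign_isUnit.mul_left_cancel
  linear_combination signed
end

section
/- Let (c_m)_{m≥0} be a sequence in a field K of characteristic zero and let α, β ∈ K. Then for every positive integer n: (β − α) · det_{0≤i,j≤n−1}( α·β·c_{i+j} + (α+β)·c_{i+j+1} + c_{i+j+2} ) · det_{0≤i,j≤n}( c_{i+j} ) = det_{0≤i,j≤n−1}( α·c_{i+j} + c_{i+j+1} ) · det_{0≤i,j≤n}( β·c_{i+j} + c_{i+j+1} ) − det_{0≤i,j≤n−1}( β·c_{i+j} + c_{i+j+1} ) · det_{0≤i,j≤n}( α·c_{i+j} + c_{i+j+1} ). -/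
open Matrix

/-!
Border a matrix `H` with `n + 1` rows and `n + 2` columns by an additional first row, and take the
determinant. Up to sign, bordering by `(1, -a, a ^ 2, …)` amounts to replacing column `j` by `a`
times column `j` plus column `j + 1`, and bordering by the last unit vector amounts to deleting the
last column. As a function of the border row, the determinant is a linear form that vanishes on the
rows of `H`. Three border rows and the first `n` rows of `H` are `n + 3` vectors of length `n + 2`,
so they satisfy an explicit linear relation, in which the linear form leaves only three terms. For
the border rows belonging to `α`, to `β` and to the last column, and for `H` the Hankel matrix of
the sequence, these are the three terms of the theorem.
-/

section BorderedDeterminants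

variable {S : Type*} {m n : ℕ}

/-- The matrix `A` bordered by an additional first row `x`. -/
def consRow (x : Fin n → S) (A : Matrix (Fin m) (Fin n) S) : Matrix (Fin (m + 1)) (Fin n) S :=
  of (vecCons x A)

@[simp]
theorem consRow_zero (x : Fin n → S) (A : Matrix (Fin m) (Fin n) S) : consRow x A 0 = x :=
  rfl

@[simp]
theorem consRow_succ (x : Fin n → S) (A : Matrix (Fin m) (Fin n) S) (i : Fin m) :
    consRow x A i.succ = A i :=
  rfl

theorem consRow_submatrix_succ (x : Fin n → S) (A : Matrix (Fin m) (Fin n) S) :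
    (consRow x A).submatrix Fin.succ id = A :=
  rfl

theorem consRow_submatrix_succAbove_succ (x : Fin n → S) (A : Matrix (Fin (m + 1)) (Fin n) S)
    (i : Fin (m + 1)) :
    (consRow x A).submatrix i.succ.succAbove id = consRow x (A.submatrix i.succAbove id) := by
  ext k
  cases k using Fin.cases <;> simp

variable {R : Type*} [CommRing R]

/-- The determinant of `A` bordered by a first row, as a linear form in that row. -/
noncomputable def borderForm (A : Matrix (Fin n) (Fin (n + 1)) R) : (Fin (n + 1) → R) →ₗ[R] R where
  toFun x := det (consRow x A)
  map_add' := detRowAlternating.map_vecCons_add A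
  map_smul' := detRowAlternating.map_vecCons_smul A

theorem borderForm_apply (A : Matrix (Fin n) (Fin (n + 1)) R) (x : Fin (n + 1) → R) :
    borderForm A x = det (consRow x A) :=
  rfl

theorem borderForm_row (A : Matrix (Fin n) (Fin (n + 1)) R) (i : Fin n) :
    borderForm A (A i) = 0 :=
  det_zero_of_row_eq (Fin.succ_ne_zero i).symm rfl

theorem sum_det_submatrix_succAbove_smul_row (A : Matrix (Fin (n + 1)) (Fin n) R) :
    ∑ i : Fin (n + 1), ((-1) ^ (i : ℕ) * det (A.submatrix i.succAbove id)) • A i = 0 := by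
  ext j
  -- Repeat column `j` in front of `A` and expand along the repeated column.
  have hdet : det (of fun i => (vecCons (A i j) (A i) : Fin (n + 1) → R)) = 0 :=
    det_zero_of_column_eq (Fin.succ_ne_zero j).symm fun i => by simp
  rw [det_succ_column_zero] at hdet
  simpa [Finset.sum_apply, mul_right_comm, submatrix] using hdet

theorem three_term_det_relation (N : Matrix (Fin n) (Fin (n + 2)) R)
    (φ : (Fin (n + 2) → R) →ₗ[R] R) (hφ : ∀ i, φ (N i) = 0) (x y z : Fin (n + 2) → R) :
    φ x * det (consRow y (consRow z N)) - φ y * det (consRow x (consRow z N)) +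
      φ z * det (consRow x (consRow y N)) = 0 := by
  have hrel := congrArg φ
    (sum_det_submatrix_succAbove_smul_row (consRow x (consRow y (consRow z N))))
  simp only [Fin.sum_univ_succ, Fin.val_zero, Fin.val_succ, Fin.succAbove_zero, consRow_zero,
    consRow_succ, consRow_submatrix_succ, consRow_submatrix_succAbove_succ, map_add, map_sum,
    map_smul, map_zero, smul_eq_mul, hφ, mul_zero, Finset.sum_const_zero] at hrel
  linear_combination hrel

theorem det_consRow_single (A : Matrix (Fin n) (Fin (n + 1)) R) (j : Fin (n + 1)) :
    det (consRow (Pi.single j 1) A) = (-1) ^ (j : ℕ) * det (A.submatrix id j.succAbove) := by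
  rw [det_succ_row_zero, Finset.sum_eq_single j]
  · simp [submatrix]
  · intro k _ hk
    simp [Pi.single_eq_of_ne hk]
  · simp

end BorderedDeterminants

section ColumnTransform

variable {R : Type*} [CommRing R] {m n : ℕ}

/-- The Christoffel transform with linear factor `X + a`, acting on the columns of a matrix: if
column `j` holds moments of `X ^ j`, then column `j` of the transform holds those of
`(X + a) * X ^ j`. -/
def christoffel (a : R) (A : Matrix (Fin m) (Fin (n + 1)) R) : Matrix (Fin m) (Fin n) R :=
  of fun i j => a * A i j.castSucc + A i j.succ

/-- The vector `(1, x, x ^ 2, …)` of length `n`, that is, a row of a Vandermonde matrix. -/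
def powers (x : R) (n : ℕ) : Fin n → R := fun j => x ^ (j : ℕ)

theorem det_consRow_powers (a : R) (A : Matrix (Fin n) (Fin (n + 1)) R) :
    det (consRow (powers (-a) (n + 1)) A) = det (christoffel a A) := by
  -- The result of adding `a` times each column to the next one.
  let B : Matrix (Fin (n + 1)) (Fin (n + 1)) R :=
    consRow (Pi.single 0 1) (of fun i => vecCons (A i 0) (christoffel a A i))
  have hdet : det (consRow (powers (-a) (n + 1)) A) = det B := by
    refine det_eq_of_forall_col_eq_smul_add_pred (fun _ => -a) ?_ ?_
    · intro i
      cases i using Fin.cases <;> simp [B, powers]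
    · intro i j
      cases i using Fin.cases <;> simp [B, powers, christoffel, pow_succ']
  have hminor : (of fun i => vecCons (A i 0) (christoffel a A i)).submatrix id
      (Fin.succAbove 0) = christoffel a A :=
    rfl
  rw [hdet, det_consRow_single, hminor, Fin.val_zero, pow_zero, one_mul]

theorem christoffel_consRow_powers (a b : R) (A : Matrix (Fin m) (Fin (n + 1)) R) :
    christoffel a (consRow (powers (-b) (n + 1)) A) =
      consRow ((a - b) • powers (-b) n) (christoffel a A) := by
  ext i j
  cases i using Fin.cases with
  | zero =>
    simp only [christoffel, powers, of_apply, consRow_zero, Fin.val_castSucc, Fin.val_succ,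
      Pi.smul_apply, smul_eq_mul]
    ring
  | succ i => simp [christoffel]

theorem det_consRow_powers_consRow_powers (a b : R) (A : Matrix (Fin n) (Fin (n + 2)) R) :
    det (consRow (powers (-a) (n + 2)) (consRow (powers (-b) (n + 2)) A)) =
      (a - b) * det (christoffel b (christoffel a A)) := by
  rw [det_consRow_powers, christoffel_consRow_powers, ← borderForm_apply, map_smul, smul_eq_mul,
    borderForm_apply, det_consRow_powers]

theorem det_consRow_single_last_consRow_powers (a : R) (A : Matrix (Fin n) (Fin (n + 2)) R) :
    det (consRow (Pi.single (Fin.last _) 1) (consRow (powers (-a) (n + 2)) A)) =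
      (-1) ^ (n + 1) * det (christoffel a (A.submatrix id Fin.castSucc)) := by
  have hborder : (consRow (powers (-a) (n + 2)) A).submatrix id Fin.castSucc =
      consRow (powers (-a) (n + 1)) (A.submatrix id Fin.castSucc) := by
    ext i
    cases i using Fin.cases <;> simp [powers]
  rw [det_consRow_single, Fin.succAbove_last, hborder, det_consRow_powers, Fin.val_last]

theorem sub_mul_det_christoffel_christoffel_mul_det (a b : R)
    (H : Matrix (Fin (n + 1)) (Fin (n + 2)) R) :
    (b - a) * det (christoffel b (christoffel a (H.submatrix Fin.castSucc id))) *
        det (H.submatrix id Fin.castSucc) =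
      det (christoffel a (H.submatrix Fin.castSucc Fin.castSucc)) * det (christoffel b H) -
        det (christoffel b (H.submatrix Fin.castSucc Fin.castSucc)) * det (christoffel a H) := by
  have hrel := three_term_det_relation (H.submatrix Fin.castSucc id) (borderForm H)
    (fun i => borderForm_row H i.castSucc)
    (Pi.single (Fin.last _) 1) (powers (-a) _) (powers (-b) _)
  rw [borderForm_apply, borderForm_apply, borderForm_apply, det_consRow_powers_consRow_powers,
    det_consRow_single_last_consRow_powers, det_consRow_single_last_consRow_powers,
    det_consRow_powers, det_consRow_powers, det_consRow_single, Fin.val_last, Fin.succAbove_last,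
    submatrix_submatrix, Function.comp_id, Function.id_comp] at hrel
  have hsign : IsUnit ((-1 : R) ^ (n + 1)) := isUnit_one.neg.pow _
  refine hsign.mul_left_cancel ?_
  linear_combination -hrel

end ColumnTransform

theorem stmt3_general {R : Type*} [CommRing R] (c : ℕ → R) (α β : R) (n : ℕ) :
    (β - α) *
        det (of fun i j : Fin n =>
          α * β * c ((i : ℕ) + j) + (α + β) * c ((i : ℕ) + j + 1) + c ((i : ℕ) + j + 2)) *
        det (of fun i j : Fin (n + 1) => c ((i : ℕ) + j)) =
      det (of fun i j : Fin n => α * c ((i : ℕ) + j) + c ((i : ℕ) + j + 1)) *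
          det (of fun i j : Fin (n + 1) => β * c ((i : ℕ) + j) + c ((i : ℕ) + j + 1)) -
        det (of fun i j : Fin n => β * c ((i : ℕ) + j) + c ((i : ℕ) + j + 1)) *
          det (of fun i j : Fin (n + 1) => α * c ((i : ℕ) + j) + c ((i : ℕ) + j + 1)) := by
  let H : Matrix (Fin (n + 1)) (Fin (n + 2)) R := of fun i j => c ((i : ℕ) + j)
  have hquad : (of fun i j : Fin n =>
      α * β * c ((i : ℕ) + j) + (α + β) * c ((i : ℕ) + j + 1) + c ((i : ℕ) + j + 2)) =
      christoffel β (christoffel α (H.submatrix Fin.castSucc id)) := by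
    ext i j
    simp only [H, christoffel, of_apply, submatrix_apply, id, Fin.val_castSucc, Fin.val_succ,
      ← add_assoc]
    ring
  rw [hquad]
  exact sub_mul_det_christoffel_christoffel_mul_det α β H

theorem stmt3 {K : Type*} [Field K] [CharZero K]
    (c : ℕ → K) (α β : K) (n : ℕ) (hn : 0 < n) :
    (β - α) *
        Matrix.det (Matrix.of fun i j : Fin n =>
          α * β * c ((i : ℕ) + j) + (α + β) * c ((i : ℕ) + j + 1) + c ((i : ℕ) + j + 2)) *
        Matrix.det (Matrix.of fun i j : Fin (n + 1) => c ((i : ℕ) + j)) =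
      Matrix.det (Matrix.of fun i j : Fin n => α * c ((i : ℕ) + j) + c ((i : ℕ) + j + 1)) *
          Matrix.det (Matrix.of fun i j : Fin (n + 1) =>
            β * c ((i : ℕ) + j) + c ((i : ℕ) + j + 1)) -
        Matrix.det (Matrix.of fun i j : Fin n => β * c ((i : ℕ) + j) + c ((i : ℕ) + j + 1)) *
          Matrix.det (Matrix.of fun i j : Fin (n + 1) =>
            α * c ((i : ℕ) + j) + c ((i : ℕ) + j + 1)) :=
  stmt3_general c α β n
end

section
/- Let M be a linear functional on the polynomial ring K[x] over a field K of characteristic zero, with moments ν_n := M(x^n), and assume that all Hankel determinants det_{0≤i,j≤n}(ν_{i+j}), n = 0, 1, 2, …, are nonzero. For each n ≥ 0 define the polynomial q_n(x) := det_{0≤i,j≤n−1}( ν_{i+j+1} − ν_{i+j}·x ). Then q_n has degree exactly n, and M( x^k · q_n(x) ) = 0 for all 0 ≤ k ≤ n−1. -/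
/- Consider the square matrix with top row `1, x, …, xⁿ` and further rows `ν_i, ν_{i+1}, …, ν_{i+n}`
for `i < n`. Subtracting from each column `x` times the preceding one turns the top row into
`1, 0, …, 0` without changing the determinant, which is therefore `q_n`. Since `x` occurs only in
the top row, `M (x^k * q_n)` is the determinant with top row `ν_k, …, ν_{k+n}` instead; for `k < n`
this row occurs twice. The coefficient of `xⁿ` in `q_n` is `(-1)ⁿ` times a Hankel determinant. -/

open Polynomial Matrix

section CommRing

variable {R : Type*} [CommRing R]

theorem degree_det_of_C_sub_C_mul_X {m : Type*} [Fintype m] [DecidableEq m] (A B : Matrix m m R)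
    (hA : A.det ≠ 0) :
    (det (of fun i j => C (B i j) - C (A i j) * X)).degree =
      (Fintype.card m : WithBot ℕ) := by
  have pencil_eq : (of fun i j => C (B i j) - C (A i j) * X) =
      (X : R[X]) • (-A).map C + B.map C := by
    ext1 i j
    simp only [of_apply, Matrix.add_apply, Matrix.smul_apply, map_apply, Matrix.neg_apply, map_neg,
      smul_eq_mul]
    ring
  have coeff_ne_zero : (det ((X : R[X]) • (-A).map C + B.map C)).coeff (Fintype.card m) ≠ 0 := by
    rw [coeff_det_X_add_C_card, det_neg]
    exact ((isUnit_neg_one.pow _).mul_right_eq_zero).not.mpr hA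
  rw [pencil_eq]
  exact le_antisymm (natDegree_le_iff_degree_le.mp (natDegree_det_X_add_C_le _ _))
    (le_degree_of_ne_zero coeff_ne_zero)

variable {n : ℕ}

theorem det_of_vecCons_pow (x : R) (N : Matrix (Fin n) (Fin (n + 1)) R) :
    det (of (vecCons (fun j => x ^ (j : ℕ)) N)) =
      det (of fun i j => N i j.succ - N i j.castSucc * x) := by
  let P : Matrix (Fin (n + 1)) (Fin (n + 1)) R := of (vecCons (fun j => x ^ (j : ℕ)) N)
  let Q : Matrix (Fin (n + 1)) (Fin (n + 1)) R :=
    of fun i => vecCons (P i 0) fun j => P i j.succ - P i j.castSucc * x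
  have det_eq : P.det = Q.det :=
    det_eq_of_forall_col_eq_smul_add_pred (fun _ => x) (fun _ => rfl) fun i j =>
      show P i j.succ = P i j.succ - P i j.castSucc * x + x * P i j.castSucc by ring
  have top_zero : Q 0 0 = 1 := pow_zero x
  have top_succ (j : Fin n) : Q 0 j.succ = 0 := sub_eq_zero.mpr (pow_succ x j)
  calc P.det = Q.det := det_eq
    _ = (Q.submatrix Fin.succ Fin.succ).det := by
      simp [det_succ_row_zero Q, Fin.sum_univ_succ, top_zero, top_succ]
    _ = det (of fun i j => N i j.succ - N i j.castSucc * x) := rfl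

theorem map_det_of_vecCons {A : Type*} [CommRing A] [Algebra R A] (f : A →ₗ[R] R)
    (v : Fin (n + 1) → A) (N : Matrix (Fin n) (Fin (n + 1)) R) :
    f (det (of (vecCons v (N.map (algebraMap R A))))) = det (of (vecCons (f ∘ v) N)) := by
  have minor_eq (j : Fin (n + 1)) :
      det ((of (vecCons v (N.map (algebraMap R A)))).submatrix Fin.succ j.succAbove) =
        algebraMap R A (N.submatrix id j.succAbove).det := by
    rw [RingHom.map_det]
    rfl
  have term_eq (j : Fin (n + 1)) (d : R) :
      f ((-1) ^ (j : ℕ) * v j * algebraMap R A d) = (-1) ^ (j : ℕ) * f (v j) * d := by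
    have smul_eq : (-1) ^ (j : ℕ) * v j * algebraMap R A d = ((-1) ^ (j : ℕ) * d) • v j := by
      simp only [Algebra.smul_def, map_mul, map_pow, map_neg, map_one]
      ring
    rw [smul_eq, map_smul, smul_eq_mul]
    ring
  rw [det_succ_row_zero, det_succ_row_zero, map_sum]
  refine Finset.sum_congr rfl fun j _ => ?_
  rw [minor_eq]
  exact term_eq j _

theorem map_X_pow_mul_det_of_C_sub_C_mul_X (M : R[X] →ₗ[R] R) (N : Matrix (Fin n) (Fin (n + 1)) R)
    (k : ℕ) :
    M (X ^ k * det (of fun i j : Fin n => C (N i j.succ) - C (N i j.castSucc) * X)) =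
      det (of (vecCons (fun j => M (X ^ (k + (j : ℕ)))) N)) := by
  calc _ = M (X ^ k * det (of (vecCons (fun j => X ^ (j : ℕ)) (N.map C)))) := by
        rw [det_of_vecCons_pow]
        rfl
    _ = det (of (vecCons (fun j => M (X ^ k * X ^ (j : ℕ))) N)) :=
      map_det_of_vecCons (M ∘ₗ LinearMap.mulLeft R (X ^ k)) (fun j => X ^ (j : ℕ)) N
    _ = _ := by simp only [pow_add]

theorem stmt6_general (M : R[X] →ₗ[R] R) (ν : ℕ → R) (hν : ∀ k, ν k = M (X ^ k))
    (hH : det (of fun i j : Fin n => ν ((i : ℕ) + j)) ≠ 0) :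
    (det (of fun i j : Fin n =>
        C (ν ((i : ℕ) + j + 1)) - C (ν ((i : ℕ) + j)) * X)).degree = (n : WithBot ℕ) ∧
      ∀ k < n, M (X ^ k * det (of fun i j : Fin n =>
        C (ν ((i : ℕ) + j + 1)) - C (ν ((i : ℕ) + j)) * X)) = 0 := by
  constructor
  · simpa only [of_apply, Fintype.card_fin] using
      degree_det_of_C_sub_C_mul_X _ (of fun i j : Fin n => ν ((i : ℕ) + j + 1)) hH
  · intro k hk
    let N : Matrix (Fin n) (Fin (n + 1)) R := of fun i j => ν ((i : ℕ) + j)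
    have top_row_eq : (fun j : Fin (n + 1) => M (X ^ (k + (j : ℕ)))) = N ⟨k, hk⟩ :=
      funext fun j => (hν _).symm
    calc _ = det (of (vecCons (fun j => M (X ^ (k + (j : ℕ)))) N)) :=
          map_X_pow_mul_det_of_C_sub_C_mul_X M N k
      _ = det (of (vecCons (N ⟨k, hk⟩) N)) := by rw [top_row_eq]
      _ = 0 := det_zero_of_row_eq (Fin.succ_ne_zero ⟨k, hk⟩).symm rfl

end CommRing

theorem stmt6 {K : Type*} [Field K] [CharZero K]
    (M : Polynomial K →ₗ[K] K) (ν : ℕ → K) (hν : ∀ k, ν k = M (X ^ k))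
    (hH : ∀ n : ℕ, Matrix.det (Matrix.of fun i j : Fin (n + 1) => ν ((i : ℕ) + j)) ≠ 0)
    (n : ℕ) :
    (Matrix.det (Matrix.of fun i j : Fin n =>
        C (ν ((i : ℕ) + j + 1)) - C (ν ((i : ℕ) + j)) * X)).degree = (n : WithBot ℕ) ∧
      ∀ k < n, M (X ^ k * Matrix.det (Matrix.of fun i j : Fin n =>
        C (ν ((i : ℕ) + j + 1)) - C (ν ((i : ℕ) + j)) * X)) = 0 :=
  stmt6_general M ν hν (by cases n with | zero => simp | succ m => exact hH m)
end

section
/- For all non-negative integers n and d, det_{0≤i,j≤n−1}( μ_{i+j+d} ) = (−1)^{n·d} · det_{1≤i,j≤d}( p^{(j−1)}_{n+i−1}(0) / (j−1)! ) · det_{0≤i,j≤n−1}( μ_{i+j} ), where p^{(j)} denotes the j-th derivative of p. -/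
open Polynomial Matrix

/-!
Write `q` for a monic polynomial of degree `d`. Consider the `n + d` linear functionals
`f ↦ L (f * X ^ j)` for `j < n` and `f ↦ [X ^ j] (f %ₘ q)` for `j < d`. Their determinant on a
family of monic polynomials of degrees `0, …, n + d - 1`, in this order, does not depend on the
family. On `q, X * q, …, X ^ (n - 1) * q, 1, X, …, X ^ (d - 1)` the matrix is block triangular, with
the moment matrix of `f ↦ L (f * q)` and an identity block on the diagonal; these degrees are out of
order by a rotation of sign `(-1) ^ (n * d)`. On the orthogonal family it is block triangular as
well, with diagonal blocks `L (p i * X ^ j)`, of the same determinant as the moment matrix of `L`,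
and the residues of `p n, …, p (n + d - 1)`. For `q = X ^ d` these residues are truncated Taylor
expansions at `0`.
-/

section FinRotate

theorem val_finRotate_pow (N m : ℕ) (i : Fin N) :
    ((finRotate N ^ m) i : ℕ) = (i + m) % N := by
  have := i.neZero
  induction m with
  | zero => simp [Nat.mod_eq_of_lt i.isLt]
  | succ m ih =>
    rw [pow_succ', Equiv.Perm.mul_apply, finRotate_apply, Fin.val_add, ih, Fin.val_one',
      ← Nat.add_mod, add_assoc]

theorem val_finRotate_pow_castAdd {n d : ℕ} (i : Fin n) :
    ((finRotate (n + d) ^ d) (Fin.castAdd d i) : ℕ) = i + d := by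
  rw [val_finRotate_pow, Fin.val_castAdd, Nat.mod_eq_of_lt (by lia)]

theorem val_finRotate_pow_natAdd {n d : ℕ} (i : Fin d) :
    ((finRotate (n + d) ^ d) (Fin.natAdd n i) : ℕ) = i := by
  rw [val_finRotate_pow, Fin.val_natAdd, add_right_comm, Nat.add_mod_left,
    Nat.mod_eq_of_lt (by lia)]

theorem sign_finRotate_pow (n d : ℕ) :
    Equiv.Perm.sign (finRotate (n + d) ^ d) = (-1) ^ (n * d) := by
  cases d with
  | zero => simp
  | succ d =>
    have parity : (n + d) * (d + 1) = n * (d + 1) + d * (d + 1) := add_mul ..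
    rw [map_pow, sign_finRotate, ← pow_mul, ← add_assoc, Nat.add_sub_cancel, parity, pow_add,
      (Nat.even_mul_succ_self d).neg_one_pow, mul_one]

end FinRotate

theorem coeff_modByMonic_X_pow {R : Type*} [Ring R] (f : R[X]) {d j : ℕ} (hj : j < d) :
    (f %ₘ X ^ d).coeff j = f.coeff j := by
  rw [modByMonic_eq_sub_mul_div, coeff_sub, coeff_X_pow_mul', if_neg hj.not_ge, sub_zero]

theorem eval_zero_iterate_derivative_div_factorial {K : Type*} [Field K] [CharZero K]
    (f : K[X]) (j : ℕ) : (derivative^[j] f).eval 0 / (j.factorial : K) = f.coeff j := by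
  rw [← coeff_zero_eq_eval_zero, coeff_iterate_derivative, zero_add, Nat.descFactorial_self,
    nsmul_eq_mul, mul_div_cancel_left₀ _ (Nat.cast_ne_zero.mpr j.factorial_ne_zero)]

theorem map_eq_zero_of_degree_lt {R M : Type*} [Ring R] [AddCommMonoid M] [Module R M]
    (S : Polynomial.Sequence R) (φ : R[X] →ₗ[R] M) {m : ℕ}
    (hS : ∀ k < m, IsUnit (S k).leadingCoeff) (hφ : ∀ k < m, φ (S k) = 0)
    {f : R[X]} (hf : f.degree < m) : φ f = 0 := by
  have span_le : Submodule.span R (S '' Set.Iio m) ≤ LinearMap.ker φ :=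
    Submodule.span_le.mpr (Set.image_subset_iff.mpr hφ)
  rw [S.span_degreeLT hS] at span_le
  exact span_le (mem_degreeLT.mpr hf)

section MonicFamily

variable {R : Type*} [CommRing R] {ι : Type*} [Fintype ι] [DecidableEq ι] {N : ℕ}

theorem det_apply_monic_eq_det_apply_X_pow (e : ι ≃ Fin N) (φ : ι → R[X] →ₗ[R] R) (p : ι → R[X])
    (hmonic : ∀ i, (p i).Monic) (hdeg : ∀ i, (p i).natDegree = e i) :
    (of fun i j => φ j (p i)).det = (of fun i j => φ j (X ^ (e i : ℕ))).det := by
  let c : Matrix ι ι R := of fun i k => (p i).coeff (e k)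
  have det_c : c.det = 1 := by
    have reindexed : reindex e e cᵀ = of fun i j : Fin N => (p (e.symm j)).coeff i := by
      ext i j
      simp [c]
    rw [← det_transpose, ← det_reindex_self e, reindexed]
    exact det_matrixOfPolynomials _ (fun i => by simp [hdeg]) fun i => hmonic _
  have factor : (of fun i j => φ j (p i)) = c * of fun i j => φ j (X ^ (e i : ℕ)) := by
    ext i j
    have expand : p i = ∑ k : ι, (p i).coeff (e k) • (X : R[X]) ^ (e k : ℕ) := by
      rw [e.sum_comp fun k : Fin N => (p i).coeff k • (X : R[X]) ^ (k : ℕ),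
        Fin.sum_univ_eq_sum_range fun k => (p i).coeff k • (X : R[X]) ^ k]
      simp only [smul_eq_C_mul]
      exact (p i).as_sum_range_C_mul_X_pow' (by rw [hdeg]; exact (e i).isLt)
    calc φ j (p i) = ∑ k, (p i).coeff (e k) * φ j (X ^ (e k : ℕ)) := by
          conv_lhs => rw [expand, map_sum]
          simp only [map_smul, smul_eq_mul]
      _ = _ := by rw [mul_apply]; rfl
  rw [factor, det_mul, det_c, one_mul]

theorem det_apply_monic_eq_sign_mul (e : ι ≃ Fin N) (σ : Equiv.Perm (Fin N))
    (φ : ι → R[X] →ₗ[R] R) {p r : ι → R[X]}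
    (hp : ∀ i, (p i).Monic) (hp_deg : ∀ i, (p i).natDegree = e i)
    (hr : ∀ i, (r i).Monic) (hr_deg : ∀ i, (r i).natDegree = σ (e i)) :
    (of fun i j => φ j (r i)).det = (Equiv.Perm.sign σ : ℤ) * (of fun i j => φ j (p i)).det := by
  have permuted : (of fun i j => φ j (X ^ (σ (e i) : ℕ))) =
      (of fun i j => φ j (X ^ (e i : ℕ))).submatrix (e.symm.permCongr σ) id := by
    ext i j
    simp
  rw [det_apply_monic_eq_det_apply_X_pow e φ p hp hp_deg,
    det_apply_monic_eq_det_apply_X_pow (e.trans σ) φ r hr hr_deg]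
  simp only [Equiv.trans_apply]
  rw [permuted, det_permute, Equiv.Perm.sign_permCongr]

end MonicFamily

section Christoffel

variable {R : Type*} [CommRing R]

/-- The functionals `f ↦ L (f * X ^ j)` for `j < n`, followed by the first `d` coefficients of the
residue of `f` modulo `q`. It is meant for monic `q` of degree `d`, when the latter coefficients
determine the residue. -/
noncomputable def momentResidueFunctional (L : R[X] →ₗ[R] R) (q : R[X]) (n d : ℕ) :
    Fin n ⊕ Fin d → R[X] →ₗ[R] R :=
  Sum.elim (fun j => L ∘ₗ LinearMap.mulRight R (X ^ (j : ℕ)))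
    fun j => lcoeff R j ∘ₗ modByMonicHom q

variable (L : R[X] →ₗ[R] R) {q : R[X]} {n d : ℕ}

theorem det_momentResidueFunctional_of_orthogonal {p : ℕ → R[X]}
    (hmonic : ∀ k, (p k).Monic) (hdeg : ∀ k, (p k).natDegree = k)
    (horth : Pairwise fun m k => L (p m * p k) = 0) :
    (of fun i j => momentResidueFunctional L q n d j
      (Sum.elim (fun i : Fin n => p i) (fun i : Fin d => p (n + i)) i)).det =
      (of fun i j : Fin n => L (X ^ (i + j : ℕ))).det *
        (of fun i j : Fin d => (p (n + i) %ₘ q).coeff j).det := by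
  nontriviality R
  let S : Polynomial.Sequence R :=
    ⟨p, fun k => by rw [degree_eq_natDegree (hmonic k).ne_zero, hdeg]⟩
  have orth_X_pow (i : Fin d) (j : Fin n) : L (p (n + i) * X ^ (j : ℕ)) = 0 :=
    map_eq_zero_of_degree_lt S (L ∘ₗ LinearMap.mulLeft R (p (n + i))) (m := n)
      (fun k _ => (hmonic k).leadingCoeff.symm ▸ isUnit_one)
      (fun k hk => horth (by lia)) (by simp [degree_X_pow])
  have blocks : (of fun i j => momentResidueFunctional L q n d j
      (Sum.elim (fun i : Fin n => p i) (fun i : Fin d => p (n + i)) i)) =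
      fromBlocks (of fun i j : Fin n => L (p i * X ^ (j : ℕ)))
        (of fun (i : Fin n) (j : Fin d) => (p i %ₘ q).coeff j) 0
        (of fun i j : Fin d => (p (n + i) %ₘ q).coeff j) := by
    ext (i | i) (j | j) <;> simp [momentResidueFunctional, orth_X_pow]
  have moments : (of fun i j : Fin n => L (p i * X ^ (j : ℕ))).det =
      (of fun i j : Fin n => L (X ^ (i + j : ℕ))).det := by
    simp only [pow_add]
    exact det_apply_monic_eq_det_apply_X_pow (Equiv.refl _)
      (fun j : Fin n => L ∘ₗ LinearMap.mulRight R (X ^ (j : ℕ))) (fun i => p i)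
      (fun i => hmonic i) fun i => hdeg i
  rw [blocks, det_fromBlocks_zero₂₁, moments]

theorem det_momentResidueFunctional_of_multiples (hq : q.Monic) (hq_deg : q.natDegree = d) :
    (of fun i j => momentResidueFunctional L q n d j
      (Sum.elim (fun i : Fin n => X ^ (i : ℕ) * q) (fun i : Fin d => X ^ (i : ℕ)) i)).det =
      (of fun i j : Fin n => L (X ^ (i + j : ℕ) * q)).det := by
  nontriviality R
  have X_pow_mod (i : Fin d) : (X ^ (i : ℕ) : R[X]) %ₘ q = X ^ (i : ℕ) := by
    rw [modByMonic_eq_self_iff hq, degree_X_pow, degree_eq_natDegree hq.ne_zero, hq_deg]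
    exact_mod_cast i.isLt
  have blocks : (of fun i j => momentResidueFunctional L q n d j
      (Sum.elim (fun i : Fin n => X ^ (i : ℕ) * q) (fun i : Fin d => X ^ (i : ℕ)) i)) =
      fromBlocks (of fun i j : Fin n => L (X ^ (i + j : ℕ) * q)) 0
        (of fun (i : Fin d) (j : Fin n) => L (X ^ (i + j : ℕ))) 1 := by
    ext (i | i) (j | j)
    · simp [momentResidueFunctional, pow_add, mul_right_comm]
    · simp [momentResidueFunctional, mul_self_modByMonic hq]
    · simp [momentResidueFunctional, pow_add]
    · simp [momentResidueFunctional, X_pow_mod, coeff_X_pow, one_apply, Fin.ext_iff, eq_comm]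
  rw [blocks, det_fromBlocks_zero₁₂, det_one, mul_one]

end Christoffel

-- The Christoffel formula for the functional `f ↦ L (f * q)`.
theorem stmt15_general {R : Type*} [CommRing R] (L : R[X] →ₗ[R] R) {p : ℕ → R[X]}
    (hmonic : ∀ k, (p k).Monic) (hdeg : ∀ k, (p k).natDegree = k)
    (horth : Pairwise fun m k => L (p m * p k) = 0)
    {q : R[X]} {n d : ℕ} (hq : q.Monic) (hq_deg : q.natDegree = d) :
    (of fun i j : Fin n => L (X ^ (i + j : ℕ) * q)).det =
      (-1) ^ (n * d) * (of fun i j : Fin d => (p (n + i) %ₘ q).coeff j).det *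
        (of fun i j : Fin n => L (X ^ (i + j : ℕ))).det := by
  nontriviality R
  have change_basis := det_apply_monic_eq_sign_mul finSumFinEquiv (finRotate (n + d) ^ d)
    (momentResidueFunctional L q n d)
    (p := Sum.elim (fun i => p i) fun i => p (n + i))
    (r := Sum.elim (fun i => X ^ (i : ℕ) * q) fun i => X ^ (i : ℕ))
    (by rintro (i | i) <;> exact hmonic _)
    (by rintro (i | i) <;> simp [hdeg])
    (by rintro (i | i); exacts [(monic_X_pow _).mul hq, monic_X_pow _])
    (by
      rintro (i | i)
      · simp [(monic_X_pow _).natDegree_mul hq, hq_deg, val_finRotate_pow_castAdd]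
      · simp [val_finRotate_pow_natAdd])
  rw [det_momentResidueFunctional_of_multiples L hq hq_deg,
    det_momentResidueFunctional_of_orthogonal L hmonic hdeg horth, sign_finRotate_pow]
    at change_basis
  rw [change_basis]
  push_cast
  ring

theorem stmt15 {K : Type*} [Field K] [CharZero K]
    (L : Polynomial K →ₗ[K] K) (p : ℕ → Polynomial K)
    (hmonic : ∀ k, (p k).Monic) (hdeg : ∀ k, (p k).natDegree = k)
    (ω : ℕ → K) (hω : ∀ k, ω k ≠ 0)
    (horth : ∀ m k, L (p m * p k) = if m = k then ω k else 0)
    (μ : ℕ → K) (hμ : ∀ k, μ k = L (X ^ k))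
    (n d : ℕ) :
    Matrix.det (Matrix.of fun i j : Fin n => μ ((i : ℕ) + j + d)) =
      (-1 : K) ^ (n * d) *
        Matrix.det (Matrix.of fun i j : Fin d =>
          (Polynomial.derivative^[(j : ℕ)] (p (n + (i : ℕ)))).eval 0 /
            ((j : ℕ).factorial : K)) *
        Matrix.det (Matrix.of fun i j : Fin n => μ ((i : ℕ) + j)) := by
  simpa only [hμ, eval_zero_iterate_derivative_div_factorial, coeff_modByMonic_X_pow, Fin.is_lt,
    ← pow_add] using stmt15_general L hmonic hdeg (fun m k hmk => (horth m k).trans (if_neg hmk))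
      (monic_X_pow d) (natDegree_X_pow d)
end
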